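/- There exists a universal constant C > 0 such that the following holds. Let α ∈ ℝ^d have entries in [0,1] with at least one entry equal to 1, and suppose ‖α‖₂² > n + 1 and ‖α‖₂² is sufficiently large relative to n (as guaranteed when n³(‖α‖₄/‖α‖₂)⁴ is small). Let 𝕐 be a random n×d matrix whose rows are i.i.d. N(0,D_α). Then −E[ln det((1/‖α‖₂²)·𝕐 D_α 𝕐ᵀ)] ≤ C·( n²·(‖α‖₄/‖α‖₂)⁴ + √( n·(‖α‖₄/‖α‖₂)⁴ ) ). -/

import Mathlib

open MeasureTheory ProbabilityTheory Real Filter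
open scoped Classical ENNReal NNReal

noncomputable section

/-- Euclidean inner product on `Fin d → ℝ`. -/
def dotp {d : ℕ} (x y : Fin d → ℝ) : ℝ := ∑ i, x i * y i

/-- The `q`-norm of a vector `α ∈ ℝ^d`. -/
def nrm {d : ℕ} (q : ℕ) (α : Fin d → ℝ) : ℝ := (∑ i, α i ^ q) ^ ((1 : ℝ) / q)

/-- The centered Gaussian measure `N(0, D_α)` on `ℝ^d`, `D_α = diag α`. -/
def gaussPi (d : ℕ) (α : Fin d → ℝ) : Measure (Fin d → ℝ) :=
  Measure.pi fun i => gaussianReal 0 (Real.toNNReal (α i))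

/-- The law of `n` i.i.d. samples from `N(0, D_α)`. -/
def sampleMeasure (n d : ℕ) (α : Fin d → ℝ) : Measure (Fin n → Fin d → ℝ) :=
  Measure.pi fun _ => gaussPi d α

/-- `t` is the `p`-th upper quantile of `⟨X₁, X₂⟩` for `X₁, X₂` i.i.d. `N(0, D_α)`. -/
def IsThreshold (d : ℕ) (α : Fin d → ℝ) (p t : ℝ) : Prop :=
  ((gaussPi d α).prod (gaussPi d α)) {xy | t ≤ dotp xy.1 xy.2} = ENNReal.ofReal p

instance (n : ℕ) : MeasurableSpace (SimpleGraph (Fin n)) := ⊤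

/-- The anisotropic random geometric graph `G(n, p, α)`, with threshold `t = t_{p,α}`. -/
def geomGraph (n d : ℕ) (α : Fin d → ℝ) (t : ℝ) : Measure (SimpleGraph (Fin n)) :=
  Measure.map (fun X => SimpleGraph.fromRel fun i j => t ≤ dotp (X i) (X j))
    (sampleMeasure n d α)

/-- The Erdős–Rényi random graph `G(n, p)`. -/
def erGraph (n : ℕ) (p : ℝ) : Measure (SimpleGraph (Fin n)) :=
  Measure.map (fun x => SimpleGraph.fromRel fun i j => x s(i, j) ≤ p)
    (Measure.pi fun _ : Sym2 (Fin n) => volume.restrict (Set.Icc (0 : ℝ) 1))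

/-- Total variation distance between two measures. -/
def tvDist {Ω : Type*} [MeasurableSpace Ω] (μ ν : Measure Ω) : ℝ :=
  ⨆ s : {s : Set Ω // MeasurableSet s}, |(μ s.1).toReal - (ν s.1).toReal|

/-- The normalized Gram-type matrix `(1/‖α‖₂²)·𝕐 D_α 𝕐ᵀ`, whose `(j,k)` entry is
`(1/‖α‖₂²) ∑_i α_i y_{j,i} y_{k,i}` for `𝕐` with rows `y_j`. -/
def gramMat {n d : ℕ} (α : Fin d → ℝ) (X : Fin n → Fin d → ℝ) :
    Matrix (Fin n) (Fin n) ℝ :=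
  Matrix.of fun j k => (∑ i, α i * X j i * X k i) / nrm 2 α ^ 2

lemma vol_prod {n : ℕ} (f : Fin n → ℝ → ℝ) (h0 : ∀ j x, 0 ≤ f j x)
    (hi : ∀ j, Integrable (f j)) :
    ∫⁻ x : Fin n → ℝ, ENNReal.ofReal (∏ j, f j (x j)) = ENNReal.ofReal (∏ j, ∫ x, f j x) := by
  rw [← integral_fintype_prod_volume_eq_prod (𝕜 := ℝ) f]
  rw [← ofReal_integral_eq_lintegral_ofReal]
  · exact Integrable.fintype_prod (𝕜 := ℝ) hi
  · exact Filter.Eventually.of_forall fun x => Finset.prod_nonneg fun j _ => h0 j _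

lemma gauss_std (n : ℕ) :
    ∫⁻ x : Fin n → ℝ, ENNReal.ofReal (Real.exp (-(x ⬝ᵥ x))) = ENNReal.ofReal (√π ^ n) := by
  have h := vol_prod (n := n) (fun _ x => Real.exp (-1 * x ^ 2)) (fun _ _ => (Real.exp_pos _).le)
    (fun _ => integrable_exp_neg_mul_sq one_pos)
  simp only [integral_gaussian, div_one, Finset.prod_const, Finset.card_univ, Fintype.card_fin] at h
  rw [← h]
  congr 1; ext x
  rw [← Real.exp_sum]
  congr 2
  simp [dotProduct, pow_two]

open scoped MatrixOrder in
lemma posdef_factor {n : ℕ} {M : Matrix (Fin n) (Fin n) ℝ} (hM : M.PosDef) :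
    ∃ B : Matrix (Fin n) (Fin n) ℝ, M = B.transpose * B := by
  have h : (0 : Matrix (Fin n) (Fin n) ℝ) ≤ M := hM.posSemidef.nonneg
  obtain ⟨B, hB⟩ := CStarAlgebra.nonneg_iff_eq_star_mul_self.mp h
  refine ⟨B, ?_⟩
  rw [hB, Matrix.star_eq_conjTranspose, Matrix.conjTranspose_eq_transpose_of_trivial]

lemma gauss_mat {n : ℕ} {M : Matrix (Fin n) (Fin n) ℝ} (hM : M.PosDef) :
    ∫⁻ x : Fin n → ℝ, ENNReal.ofReal (Real.exp (-(x ⬝ᵥ M.mulVec x))) =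
      ENNReal.ofReal (√π ^ n * Real.exp (-(1/2) * Real.log M.det)) := by
  obtain ⟨B, hB⟩ := posdef_factor hM
  have hd : M.det = B.det ^ 2 := by rw [hB, Matrix.det_mul, Matrix.det_transpose, pow_two]
  have hpos := hM.det_pos
  have hB0 : B.det ≠ 0 := by intro h; rw [hd, h] at hpos; simp at hpos
  have hq : ∀ x, x ⬝ᵥ M.mulVec x = (Matrix.toLin' B x) ⬝ᵥ (Matrix.toLin' B x) := by
    intro x
    rw [hB, ← Matrix.mulVec_mulVec, Matrix.dotProduct_mulVec, Matrix.vecMul_transpose,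
      Matrix.toLin'_apply]
  simp_rw [hq]
  have hm : Measurable (Matrix.toLin' B) :=
    (LinearMap.continuous_of_finiteDimensional _).measurable
  have hg : Measurable fun y : Fin n → ℝ => ENNReal.ofReal (Real.exp (-(y ⬝ᵥ y))) := by
    unfold dotProduct; fun_prop
  rw [← lintegral_map (μ := volume) hg hm, Real.map_matrix_volume_pi_eq_smul_volume_pi hB0,
    lintegral_smul_measure, gauss_std, smul_eq_mul, ← ENNReal.ofReal_mul (abs_nonneg _), mul_comm]
  congr 2
  rw [hd, Real.log_pow, ← Real.log_abs, abs_inv]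
  rw [show -(1/2:ℝ) * (((2:ℕ):ℝ) * Real.log |B.det|) = -Real.log |B.det| by push_cast; ring,
    Real.exp_neg, Real.exp_log (abs_pos.mpr hB0)]

lemma gauss_mat_le {n : ℕ} {M : Matrix (Fin n) (Fin n) ℝ} (hM : M.PosSemidef) :
    ENNReal.ofReal (√π ^ n * Real.exp (-(1/2) * Real.log M.det)) ≤
    ∫⁻ x : Fin n → ℝ, ENNReal.ofReal (Real.exp (-(x ⬝ᵥ M.mulVec x))) := by
  by_cases h0 : M.det = 0
  · have hc : ContinuousAt (fun δ : ℝ => (M + δ • (1 : Matrix (Fin n) (Fin n) ℝ)).det) 0 := by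
      apply Continuous.continuousAt
      apply Continuous.matrix_det
      fun_prop
    have h1 : ∀ᶠ δ in nhds (0:ℝ), (M + δ • (1 : Matrix (Fin n) (Fin n) ℝ)).det < 1 := by
      apply hc.eventually_lt_const
      simp [h0]
    obtain ⟨δ, hδ1, hδ0⟩ := ((h1.filter_mono nhdsWithin_le_nhds).and
      (self_mem_nhdsWithin (s := Set.Ioi (0:ℝ)))).exists
    have hδ0 : 0 < δ := hδ0
    have hP : (M + δ • (1 : Matrix (Fin n) (Fin n) ℝ)).PosDef :=
      Matrix.PosDef.posSemidef_add hM (Matrix.PosDef.one.smul hδ0)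
    calc _ ≤ ENNReal.ofReal (√π ^ n * Real.exp (-(1/2) *
            Real.log (M + δ • (1 : Matrix (Fin n) (Fin n) ℝ)).det)) := by
          refine ENNReal.ofReal_le_ofReal (mul_le_mul_of_nonneg_left
            (Real.exp_le_exp.mpr ?_) (by positivity))
          have := Real.log_nonpos hP.det_pos.le hδ1.le
          rw [h0, Real.log_zero]; linarith
      _ = _ := (gauss_mat hP).symm
      _ ≤ _ := by
          apply lintegral_mono
          intro x
          apply ENNReal.ofReal_le_ofReal
          apply Real.exp_le_exp.mpr
          rw [Matrix.add_mulVec, dotProduct_add, Matrix.smul_mulVec, Matrix.one_mulVec,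
            dotProduct_smul, smul_eq_mul]
          have : 0 ≤ x ⬝ᵥ x := Finset.sum_nonneg fun i _ => mul_self_nonneg _
          nlinarith
  · rw [gauss_mat (hM.posDef_iff_det_ne_zero.mpr h0)]

lemma swap_pi {n d : ℕ} (ν : Fin d → Measure ℝ) [∀ i, IsProbabilityMeasure (ν i)] :
    Measure.map (fun (X : Fin n → Fin d → ℝ) i j => X j i)
      (Measure.pi fun _ : Fin n => Measure.pi ν) =
    Measure.pi fun i => Measure.pi fun _ : Fin n => ν i := by
  symm
  have hm : Measurable (fun (X : Fin n → Fin d → ℝ) i j => X j i) := by fun_prop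
  refine Measure.pi_eq_generateFrom
    (C := fun _ => Set.pi Set.univ '' Set.pi Set.univ fun _ : Fin n => {s : Set ℝ | MeasurableSet s})
    (fun i => generateFrom_pi) (fun i => isPiSystem_pi) (fun i => ?_) ?_
  · refine ⟨fun _ => Set.univ, fun _ => ?_, fun _ => by simp, by simp [Set.iUnion_const]⟩
    exact ⟨fun _ => Set.univ, by simp, by simp⟩
  · intro s hs
    choose t ht hts using hs
    obtain rfl : (fun i => Set.pi Set.univ (t i)) = s := funext hts
    have htm : ∀ i j, MeasurableSet (t i j) := fun i j => ht i j (Set.mem_univ _)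
    rw [Measure.map_apply hm
      (MeasurableSet.univ_pi fun i => MeasurableSet.univ_pi fun j => htm i j)]
    have : (fun (X : Fin n → Fin d → ℝ) i j => X j i) ⁻¹'
        (Set.pi Set.univ fun i => Set.pi Set.univ (t i)) =
        Set.pi Set.univ fun j => Set.pi Set.univ fun i => t i j := by
      ext X
      simp only [Set.mem_preimage, Set.mem_pi, Set.mem_univ, true_imp_iff]
      exact forall_comm
    rw [this]
    simp only [Measure.pi_pi]
    exact Finset.prod_comm

lemma lintegral_cols {n d : ℕ} (α : Fin d → ℝ) (g : Fin d → (Fin n → ℝ) → ℝ≥0∞)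
    (hg : ∀ i, Measurable (g i)) :
    ∫⁻ X, ∏ i, g i (fun j => X j i) ∂(sampleMeasure n d α) =
      ∏ i, ∫⁻ y, g i y ∂(Measure.pi fun _ : Fin n => gaussianReal 0 (Real.toNNReal (α i))) := by
  have hm : Measurable (fun (X : Fin n → Fin d → ℝ) i j => X j i) := by fun_prop
  have h1 : ∫⁻ X, ∏ i, g i (fun j => X j i) ∂(sampleMeasure n d α) =
      ∫⁻ Y : Fin d → Fin n → ℝ, ∏ i, g i (Y i) ∂(Measure.pi fun i =>
        Measure.pi fun _ : Fin n => gaussianReal 0 (Real.toNNReal (α i))) := by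
    rw [← swap_pi (n := n) (fun i => gaussianReal 0 (Real.toNNReal (α i))), lintegral_map _ hm]
    · rfl
    · exact Finset.measurable_prod _ fun i _ => (hg i).comp (measurable_pi_apply i)
  rw [h1]
  have hind := iIndepFun_pi (μ := fun i : Fin d =>
        Measure.pi fun _ : Fin n => gaussianReal 0 (Real.toNNReal (α i)))
        (X := g) (fun i => (hg i).aemeasurable)
  rw [lintegral_prod_eq_prod_lintegral_of_indepFun Finset.univ _ hind
    (fun i => (hg i).comp (measurable_pi_apply i))]
  refine Finset.prod_congr rfl fun i _ => ?_
  have := measurePreserving_eval (fun i : Fin d =>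
        Measure.pi fun _ : Fin n => gaussianReal 0 (Real.toNNReal (α i))) i
  exact this.lintegral_comp (hg i)

lemma lin_law {n : ℕ} (v : ℝ≥0) (x : Fin n → ℝ) :
    Measure.map (fun y : Fin n → ℝ => ∑ j, x j * y j)
      (Measure.pi fun _ : Fin n => gaussianReal 0 v) =
    gaussianReal 0 (Real.toNNReal (x ⬝ᵥ x) * v) := by
  have hm : Measurable (fun y : Fin n → ℝ => ∑ j, x j * y j) := by fun_prop
  have : IsProbabilityMeasure (Measure.map (fun y : Fin n → ℝ => ∑ j, x j * y j)
      (Measure.pi fun _ : Fin n => gaussianReal 0 v)) :=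
    Measure.isProbabilityMeasure_map hm.aemeasurable
  apply Measure.ext_of_charFun
  have hind := iIndepFun_pi (μ := fun _ : Fin n => gaussianReal 0 v)
        (X := fun j y => x j * y) (fun j => by fun_prop)
  rw [hind.charFun_map_fun_sum_eq_prod
    (fun j => ((measurable_pi_apply j).const_mul (x j)).aemeasurable)]
  have hj : ∀ j, Measure.map (fun y : Fin n → ℝ => x j * y j)
      (Measure.pi fun _ : Fin n => gaussianReal 0 v) =
      gaussianReal 0 (Real.toNNReal (x j ^ 2) * v) := by
    intro j
    have h1 := (measurePreserving_eval (fun _ : Fin n => gaussianReal 0 v) j).map_eq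
    have h2 := gaussianReal_map_const_mul (μ := 0) (v := v) (x j)
    rw [← h1, Measure.map_map (by fun_prop) (by fun_prop)] at h2
    simp only [mul_zero] at h2
    rw [show Real.toNNReal (x j ^ 2) = ⟨x j ^ 2, sq_nonneg _⟩ from
      Real.toNNReal_of_nonneg (sq_nonneg _)]
    exact h2
  simp only [hj]
  ext t
  rw [Finset.prod_apply]
  simp only [charFun_gaussianReal]
  rw [← Complex.exp_sum]
  congr 1
  have hx : 0 ≤ x ⬝ᵥ x := Finset.sum_nonneg fun i _ => mul_self_nonneg _
  simp only [NNReal.coe_mul, Real.coe_toNNReal _ hx, Real.coe_toNNReal _ (sq_nonneg _)]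
  simp only [dotProduct]
  push_cast
  simp only [mul_zero, zero_mul, zero_sub, Finset.sum_neg_distrib, Finset.sum_mul, Finset.sum_div]
  congr 1
  refine Finset.sum_congr rfl fun j _ => by ring

lemma gauss_one (v : ℝ≥0) {c : ℝ} (hc : 0 ≤ c) :
    ∫⁻ g, ENNReal.ofReal (Real.exp (-(c * g ^ 2))) ∂(gaussianReal 0 v) =
      ENNReal.ofReal (√(1 + 2 * c * v))⁻¹ := by
  rw [← ofReal_integral_eq_lintegral_ofReal]
  · congr 1
    by_cases hv : v = 0
    · subst hv; simp
    · have hv' : (0:ℝ) < v := by positivity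
      rw [integral_gaussianReal_eq_integral_smul hv]
      simp only [gaussianPDFReal, sub_zero, smul_eq_mul, mul_assoc, ← Real.exp_add]
      rw [integral_const_mul]
      have : ∀ x : ℝ, -x ^ 2 / (2 * (v:ℝ)) + -(c * x ^ 2) = -(c + 1 / (2 * v)) * x ^ 2 := by
        intro x; field_simp; ring
      simp only [this]
      rw [integral_gaussian, ← Real.sqrt_inv, ← Real.sqrt_mul (by positivity), ← Real.sqrt_inv]
      congr 1
      field_simp
      ring
  · refine Integrable.of_bound (C := 1) (by fun_prop) (Filter.Eventually.of_forall fun g => ?_)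
    rw [Real.norm_eq_abs, abs_of_pos (Real.exp_pos _)]
    apply Real.exp_le_one_iff.mpr
    have : 0 ≤ c * g ^ 2 := by positivity
    linarith
  · exact Filter.Eventually.of_forall fun x => (Real.exp_pos _).le

lemma quad_form {n d : ℕ} (α : Fin d → ℝ) (X : Fin n → Fin d → ℝ) (x : Fin n → ℝ) :
    x ⬝ᵥ (gramMat α X).mulVec x = ∑ i, α i / nrm 2 α ^ 2 * (∑ j, x j * X j i) ^ 2 := by
  have h1 : x ⬝ᵥ (gramMat α X).mulVec x =
      ∑ j, ∑ k, ∑ i, α i / nrm 2 α ^ 2 * ((x j * X j i) * (x k * X k i)) := by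
    simp only [gramMat, dotProduct, Matrix.mulVec, Matrix.of_apply, Finset.mul_sum,
      Finset.sum_div, Finset.sum_mul]
    refine Finset.sum_congr rfl fun i _ => Finset.sum_congr rfl fun j _ =>
      Finset.sum_congr rfl fun k _ => by ring
  have h2 : ∀ i, α i / nrm 2 α ^ 2 * (∑ j, x j * X j i) ^ 2 =
      ∑ j, ∑ k, α i / nrm 2 α ^ 2 * ((x j * X j i) * (x k * X k i)) := by
    intro i
    rw [pow_two (∑ j, x j * X j i), Finset.sum_mul_sum, Finset.mul_sum]
    exact Finset.sum_congr rfl fun j _ => Finset.mul_sum _ _ _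
  simp only [h1, h2]
  rw [Finset.sum_comm' (s := (Finset.univ : Finset (Fin d)))
    (t := fun _ => (Finset.univ : Finset (Fin n)))
    (t' := (Finset.univ : Finset (Fin n))) (s' := fun _ => Finset.univ) (by simp)]
  exact Finset.sum_congr rfl fun j _ => Finset.sum_comm

lemma gram_psd {n d : ℕ} (α : Fin d → ℝ) (h0 : ∀ i, 0 ≤ α i) (X : Fin n → Fin d → ℝ) :
    (gramMat α X).PosSemidef := by
  rw [Matrix.posSemidef_iff_dotProduct_mulVec]
  constructor
  · ext j k
    simp only [gramMat, Matrix.conjTranspose_apply, Matrix.of_apply, star_trivial]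
    congr 1
    exact Finset.sum_congr rfl fun i _ => by ring
  · intro x
    rw [star_trivial, quad_form]
    exact Finset.sum_nonneg fun i _ =>
      mul_nonneg (div_nonneg (h0 i) (sq_nonneg _)) (sq_nonneg _)

lemma expect_quad {n d : ℕ} (α : Fin d → ℝ) (h0 : ∀ i, 0 ≤ α i) (x : Fin n → ℝ) :
    ∫⁻ X, ENNReal.ofReal (Real.exp (-(x ⬝ᵥ (gramMat α X).mulVec x))) ∂(sampleMeasure n d α) =
    ENNReal.ofReal (∏ i, (√(1 + 2 * (α i ^ 2 / nrm 2 α ^ 2) * (x ⬝ᵥ x)))⁻¹) := by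
  have hx : 0 ≤ x ⬝ᵥ x := Finset.sum_nonneg fun i _ => mul_self_nonneg _
  simp_rw [quad_form, ← Finset.sum_neg_distrib, Real.exp_sum]
  simp_rw [ENNReal.ofReal_prod_of_nonneg fun _ _ => (Real.exp_pos _).le]
  rw [lintegral_cols α (fun i y => ENNReal.ofReal
    (Real.exp (-(α i / nrm 2 α ^ 2 * (∑ j, x j * y j) ^ 2)))) (fun i => by fun_prop)]
  rw [ENNReal.ofReal_prod_of_nonneg fun _ _ => by positivity]
  refine Finset.prod_congr rfl fun i _ => ?_
  have h := gauss_one (Real.toNNReal (x ⬝ᵥ x) * Real.toNNReal (α i))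
    (c := α i / nrm 2 α ^ 2) (div_nonneg (h0 i) (sq_nonneg _))
  rw [← lin_law, lintegral_map (by fun_prop) (by fun_prop)] at h
  rw [h, NNReal.coe_mul, Real.coe_toNNReal _ hx, Real.coe_toNNReal _ (h0 i)]
  congr 4
  ring

lemma pointwise_bd {d : ℕ} (w : Fin d → ℝ) (hw : ∀ i, 0 ≤ w i) (hs : ∑ i, w i = 1) {T : ℝ}
    (hT : 0 < T) (hτ : ∑ i, w i ^ 2 = 1 / T ^ 2) (n : ℕ) (hn : (n : ℝ) ≤ T / 2)
    {t : ℝ} (ht : 0 ≤ t) :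
    ∏ i, (√(1 + 2 * w i * t))⁻¹ ≤
      Real.exp (-t) * (1 + 2 * (1 / T ^ 2) * t ^ 2) +
        Real.exp (n - T / 2) * ((1 + 2 / T * t) ^ n)⁻¹ := by
  have hpos : ∀ i, 0 < 1 + 2 * w i * t := fun i => by have := hw i; positivity
  have hterm : ∀ i, (√(1 + 2 * w i * t))⁻¹ = Real.exp (-(1/2) * Real.log (1 + 2 * w i * t)) := by
    intro i
    rw [show -(1/2) * Real.log (1 + 2 * w i * t) = -(Real.log (1 + 2 * w i * t) / 2) by ring,
      Real.exp_neg, ← Real.log_sqrt (hpos i).le, Real.exp_log (Real.sqrt_pos.mpr (hpos i))]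
  simp_rw [hterm]
  rw [← Real.exp_sum]
  by_cases hc : t ≤ T
  · have h1 : ∑ i, -(1/2) * Real.log (1 + 2 * w i * t) ≤ -t + 1 / T ^ 2 * t ^ 2 := by
      calc _ ≤ ∑ i, (-(w i * t) + w i ^ 2 * t ^ 2) := by
            refine Finset.sum_le_sum fun i _ => ?_
            have h3 : 2 * w i * t - (2 * w i * t) ^ 2 / 2 ≤ Real.log (1 + 2 * w i * t) := by
              have hu : 0 ≤ 2 * w i * t := by have := hw i; positivity
              refine le_trans ?_ (Real.le_log_one_add_of_nonneg hu)
              rw [le_div_iff₀ (by positivity)]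
              have : 0 ≤ (2 * w i * t) ^ 3 := by positivity
              nlinarith
            nlinarith
        _ = _ := by
            rw [Finset.sum_add_distrib, Finset.sum_neg_distrib, ← Finset.sum_mul,
              ← Finset.sum_mul, hs, hτ]; ring
    have hy0 : 0 ≤ 1 / T ^ 2 * t ^ 2 := by positivity
    have hy1 : 1 / T ^ 2 * t ^ 2 ≤ 1 := by
      rw [one_div, inv_mul_le_iff₀ (by positivity), mul_one]
      exact pow_le_pow_left₀ ht hc 2
    have h2 : Real.exp (1 / T ^ 2 * t ^ 2) ≤ 1 + 2 * (1 / T ^ 2) * t ^ 2 := by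
      have := Real.abs_exp_sub_one_le (x := 1 / T ^ 2 * t ^ 2) (by rwa [abs_of_nonneg hy0])
      rw [abs_of_nonneg hy0] at this
      have := (abs_le.mp this).2
      linarith
    calc _ ≤ Real.exp (-t + 1 / T ^ 2 * t ^ 2) := Real.exp_le_exp.mpr h1
      _ = Real.exp (-t) * Real.exp (1 / T ^ 2 * t ^ 2) := Real.exp_add _ _
      _ ≤ Real.exp (-t) * (1 + 2 * (1 / T ^ 2) * t ^ 2) := by gcongr
      _ ≤ _ := le_add_of_nonneg_right (by positivity)
  · push Not at hc
    set L := Real.log (1 + 2 / T * t) with hL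
    have hb : 0 < 1 + 2 / T * t := by positivity
    have h3 : 3 ≤ 1 + 2 / T * t := by
      have : 2 ≤ 2 / T * t := by rw [div_mul_eq_mul_div, le_div_iff₀ hT]; linarith
      linarith
    have hL1 : 1 ≤ L := by
      rw [hL, Real.le_log_iff_exp_le hb]
      have := Real.exp_one_lt_d9
      linarith
    have hwT : ∀ i, w i * T ≤ 1 := by
      intro i
      have h : w i ^ 2 ≤ 1 / T ^ 2 := by
        rw [← hτ]
        exact Finset.single_le_sum (f := fun i => w i ^ 2) (fun i _ => sq_nonneg _)
          (Finset.mem_univ i)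
      rw [le_div_iff₀ (by positivity), ← mul_pow] at h
      exact (sq_le_one_iff₀ (mul_nonneg (hw i) hT.le)).mp h
    have hlog : ∀ i, w i * T * L ≤ Real.log (1 + 2 * w i * t) := by
      intro i
      have h := rpow_one_add_le_one_add_mul_self (s := 2 / T * t) (by linarith)
        (mul_nonneg (hw i) hT.le) (hwT i)
      have h' := Real.log_le_log (Real.rpow_pos_of_pos hb _) h
      rw [Real.log_rpow hb] at h'
      rwa [show w i * T * (2 / T * t) = 2 * w i * t by field_simp] at h'
    have hsum : ∑ i, -(1/2) * Real.log (1 + 2 * w i * t) ≤ -(1/2) * (T * L) := by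
      rw [← Finset.mul_sum]
      have : T * L ≤ ∑ i, Real.log (1 + 2 * w i * t) := by
        calc T * L = ∑ i, w i * T * L := by simp_rw [mul_assoc]; rw [← Finset.sum_mul, hs, one_mul]
          _ ≤ _ := Finset.sum_le_sum fun i _ => hlog i
      linarith
    have hpow : ((1 + 2 / T * t) ^ n)⁻¹ = Real.exp (-(n * L)) := by
      rw [Real.exp_neg, Real.exp_nat_mul, hL, Real.exp_log hb]
    rw [hpow, ← Real.exp_add]
    refine le_trans (Real.exp_le_exp.mpr ?_) (le_add_of_nonneg_left (by positivity))
    nlinarith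

lemma int_cauchy {c : ℝ} (hc : 0 < c) :
    Integrable (fun x : ℝ => (1 + c * x ^ 2)⁻¹) ∧ ∫ x : ℝ, (1 + c * x ^ 2)⁻¹ = (√c)⁻¹ * π := by
  have h : (fun x : ℝ => (1 + c * x ^ 2)⁻¹) = fun x => (fun y : ℝ => (1 + y ^ 2)⁻¹) (√c * x) := by
    ext x; simp only [mul_pow, Real.sq_sqrt hc.le]
  have hs : 0 < √c := Real.sqrt_pos.mpr hc
  constructor
  · rw [h]; exact integrable_inv_one_add_sq.comp_mul_left' hs.ne'
  · rw [h, Measure.integral_comp_mul_left (fun y : ℝ => (1 + y ^ 2)⁻¹), integral_univ_inv_one_add_sq, smul_eq_mul,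
      abs_of_pos (inv_pos.mpr hs)]

lemma int_tail (n : ℕ) {T : ℝ} (hT : 0 < T) :
    ∫⁻ x : Fin n → ℝ, ENNReal.ofReal (((1 + 2 / T * (x ⬝ᵥ x)) ^ n)⁻¹) ≤
      ENNReal.ofReal (√π ^ n * √(2 * T) ^ n) := by
  have hc : 0 < 2 / T := by positivity
  obtain ⟨hi, hv⟩ := int_cauchy hc
  have h := vol_prod (n := n) (fun _ x => (1 + 2 / T * x ^ 2)⁻¹) (fun _ _ => by positivity)
    (fun _ => hi)
  calc _ ≤ ∫⁻ x : Fin n → ℝ, ENNReal.ofReal (∏ j, (1 + 2 / T * x j ^ 2)⁻¹) := by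
        refine lintegral_mono fun x => ENNReal.ofReal_le_ofReal ?_
        rw [Finset.prod_inv_distrib]
        apply inv_anti₀ (Finset.prod_pos fun j _ => by positivity)
        calc ∏ j, (1 + 2 / T * x j ^ 2) ≤ ∏ _j : Fin n, (1 + 2 / T * (x ⬝ᵥ x)) := by
              refine Finset.prod_le_prod (fun j _ => by positivity) fun j _ => ?_
              have : x j ^ 2 ≤ x ⬝ᵥ x := by
                rw [pow_two]
                exact Finset.single_le_sum (f := fun j => x j * x j)
                  (fun i _ => mul_self_nonneg _) (Finset.mem_univ j)
              gcongr
          _ = _ := by simp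
    _ = ENNReal.ofReal (((√(2/T))⁻¹ * π) ^ n) := by
        rw [h]; simp [hv]
    _ ≤ _ := by
        apply ENNReal.ofReal_le_ofReal
        rw [← mul_pow]
        refine pow_le_pow_left₀ (by positivity) ?_ n
        rw [← Real.sqrt_inv, ← Real.sqrt_mul Real.pi_pos.le]
        apply Real.le_sqrt_of_sq_le
        rw [mul_pow, Real.sq_sqrt (by positivity), inv_div]
        have := Real.pi_le_four
        have h2 := Real.pi_pos
        have : π * π ≤ 4 * π := by nlinarith
        nlinarith

lemma int_quartic (n : ℕ) (j : Fin n) :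
    ∫⁻ x : Fin n → ℝ, ENNReal.ofReal (x j ^ 4 * Real.exp (-(x ⬝ᵥ x))) ≤
      ENNReal.ofReal (√π ^ n * 12) := by
  have h := vol_prod (n := n) (fun k x => Real.exp (-(if k = j then (1/2:ℝ) else 1) * x ^ 2))
    (fun _ _ => (Real.exp_pos _).le)
    (fun k => integrable_exp_neg_mul_sq (by split_ifs <;> norm_num))
  have hprod : ∏ k : Fin n, √(π / (if k = j then (1/2:ℝ) else 1)) = √π ^ n * √2 := by
    have : ∀ k : Fin n, √(π / (if k = j then (1/2:ℝ) else 1)) = √π * (if k = j then √2 else 1) := by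
      intro k
      split_ifs
      · rw [← Real.sqrt_mul Real.pi_pos.le]; congr 1; ring
      · simp
    simp_rw [this, Finset.prod_mul_distrib, Finset.prod_ite_eq']
    simp
  calc _ ≤ ∫⁻ x : Fin n → ℝ, ENNReal.ofReal 8 * ENNReal.ofReal
          (∏ k, Real.exp (-(if k = j then (1/2:ℝ) else 1) * x k ^ 2)) := by
        refine lintegral_mono fun x => ?_
        rw [← ENNReal.ofReal_mul (by norm_num)]
        apply ENNReal.ofReal_le_ofReal
        have h1 : x j ^ 4 ≤ 8 * Real.exp (x j ^ 2 / 2) := by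
          have := Real.quadratic_le_exp_of_nonneg (x := x j ^ 2 / 2) (by positivity)
          nlinarith [sq_nonneg (x j)]
        rw [← Real.exp_sum]
        have h2 : ∑ k, -(if k = j then (1/2:ℝ) else 1) * x k ^ 2 = x j ^ 2 / 2 + -(x ⬝ᵥ x) := by
          have : ∀ k, -(if k = j then (1/2:ℝ) else 1) * x k ^ 2 =
              (if k = j then x k ^ 2 / 2 else 0) + -(x k * x k) := by
            intro k; split_ifs <;> ring
          simp_rw [this, Finset.sum_add_distrib, Finset.sum_ite_eq', Finset.sum_neg_distrib]
          simp [dotProduct]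
        rw [h2, Real.exp_add, ← mul_assoc]
        gcongr
    _ = ENNReal.ofReal (8 * (√π ^ n * √2)) := by
        rw [lintegral_const_mul _ (by fun_prop), h, ← ENNReal.ofReal_mul (by norm_num)]
        simp_rw [integral_gaussian, hprod]
    _ ≤ _ := by
        apply ENNReal.ofReal_le_ofReal
        have : √2 ≤ 1.5 := Real.sqrt_le_iff.mpr (by norm_num)
        have h0 : 0 < √π ^ n := by positivity
        nlinarith

lemma int_main (n : ℕ) {τ : ℝ} (hτ : 0 ≤ τ) :
    ∫⁻ x : Fin n → ℝ, ENNReal.ofReal (Real.exp (-(x ⬝ᵥ x)) * (1 + 2 * τ * (x ⬝ᵥ x) ^ 2)) ≤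
      ENNReal.ofReal (√π ^ n * (1 + 24 * n ^ 2 * τ)) := by
  have hm : ∀ j : Fin n, Measurable fun x : Fin n → ℝ =>
      ENNReal.ofReal (x j ^ 4 * Real.exp (-(x ⬝ᵥ x))) := by
    intro j; unfold dotProduct; fun_prop
  have hm0 : Measurable fun x : Fin n → ℝ => ENNReal.ofReal (Real.exp (-(x ⬝ᵥ x))) := by
    unfold dotProduct; fun_prop
  calc _ ≤ ∫⁻ x : Fin n → ℝ, (ENNReal.ofReal (Real.exp (-(x ⬝ᵥ x))) +
          ENNReal.ofReal (2 * τ * n) * ∑ j, ENNReal.ofReal (x j ^ 4 * Real.exp (-(x ⬝ᵥ x)))) := by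
        refine lintegral_mono fun x => ?_
        rw [← ENNReal.ofReal_sum_of_nonneg fun j _ => by positivity,
          ← ENNReal.ofReal_mul (by positivity), ← ENNReal.ofReal_add (by positivity)
          (mul_nonneg (by positivity) (Finset.sum_nonneg fun j _ => by positivity))]
        apply ENNReal.ofReal_le_ofReal
        have h : (x ⬝ᵥ x) ^ 2 ≤ n * ∑ j, x j ^ 4 := by
          have := sq_sum_le_card_mul_sum_sq (s := (Finset.univ : Finset (Fin n)))
            (f := fun j => x j * x j)
          simp only [Finset.card_univ, Fintype.card_fin] at this
          refine this.trans_eq ?_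
          congr 1
          exact Finset.sum_congr rfl fun j _ => by ring
        rw [← Finset.sum_mul]
        have he := Real.exp_pos (-(x ⬝ᵥ x))
        calc _ = Real.exp (-(x ⬝ᵥ x)) + 2 * τ * Real.exp (-(x ⬝ᵥ x)) * (x ⬝ᵥ x) ^ 2 := by ring
          _ ≤ Real.exp (-(x ⬝ᵥ x)) + 2 * τ * Real.exp (-(x ⬝ᵥ x)) * (n * ∑ j, x j ^ 4) := by gcongr
          _ = _ := by ring
    _ = ENNReal.ofReal (√π ^ n) + ENNReal.ofReal (2 * τ * n) *
          ∑ j : Fin n, ∫⁻ x : Fin n → ℝ, ENNReal.ofReal (x j ^ 4 * Real.exp (-(x ⬝ᵥ x))) := by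
        rw [lintegral_add_left hm0, gauss_std, lintegral_const_mul _
          (Finset.measurable_sum _ fun j _ => hm j), lintegral_finsetSum _ fun j _ => hm j]
    _ ≤ ENNReal.ofReal (√π ^ n) + ENNReal.ofReal (2 * τ * n) *
          ∑ j : Fin n, ENNReal.ofReal (√π ^ n * 12) := by
        gcongr with j
        exact int_quartic n j
    _ = _ := by
        rw [← ENNReal.ofReal_sum_of_nonneg fun j _ => by positivity,
          ← ENNReal.ofReal_mul (by positivity), ← ENNReal.ofReal_add (by positivity)
          (mul_nonneg (by positivity) (Finset.sum_nonneg fun j _ => by positivity))]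
        congr 1
        simp only [Finset.sum_const, Finset.card_univ, Fintype.card_fin, nsmul_eq_mul]
        ring

lemma numeric (n : ℕ) (hn : 1 ≤ n) {T : ℝ} (hT : 0 < T) (h : (n:ℝ) ^ 3 ≤ 4 / 1000 * T ^ 2) :
    (n : ℝ) ≤ T / 2 ∧ Real.exp (n - T / 2) * √(2 * T) ^ n ≤ 200 * (1 / T ^ 2) := by
  set u := (2 * T) ^ ((1:ℝ)/3) with hu
  have hu0 : 0 < u := by positivity
  have hu3 : u ^ 3 = 2 * T := by
    rw [hu, ← Real.rpow_natCast, ← Real.rpow_mul (by positivity)]; norm_num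
  have hT' : T = u ^ 3 / 2 := by linarith
  have hn1 : (1:ℝ) ≤ n := by exact_mod_cast hn
  have hnu : (n:ℝ) ≤ u ^ 2 / 10 := by
    apply le_of_pow_le_pow_left₀ (n := 3) (by norm_num) (by positivity)
    rw [hT'] at h
    refine h.trans_eq ?_
    ring
  have hu2 : 10 ≤ u ^ 2 := by linarith
  have hu_3 : 3 ≤ u := by nlinarith
  have hlog : Real.log u ≤ u - 1 := Real.log_le_sub_one_of_pos hu0
  have hsq : √(2 * T) = Real.exp (3 / 2 * Real.log u) := by
    rw [← hu3, ← Real.exp_log (Real.sqrt_pos.mpr (by positivity : 0 < u ^ 3)),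
      Real.log_sqrt (by positivity), Real.log_pow]
    congr 1; push_cast; ring
  constructor
  · nlinarith
  rw [hsq, ← Real.exp_nat_mul, ← Real.exp_add]
  have hexp : (n:ℝ) - T / 2 + n * (3 / 2 * Real.log u) ≤ -(T / 10) := by
    have h1 : (n:ℝ) * (3 / 2 * Real.log u) ≤ u ^ 2 / 10 * (3 / 2 * (u - 1)) := by
      apply mul_le_mul hnu (by linarith) _ (by positivity)
      have := Real.log_nonneg (by linarith : 1 ≤ u)
      positivity
    rw [hT']
    nlinarith
  refine (Real.exp_le_exp.mpr hexp).trans ?_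
  rw [Real.exp_neg, mul_one_div, inv_eq_one_div, div_le_div_iff₀ (Real.exp_pos _) (by positivity)]
  have := Real.quadratic_le_exp_of_nonneg (x := T / 10) (by positivity)
  nlinarith

lemma nrm_pow {d : ℕ} (q : ℕ) (hq : q ≠ 0) (α : Fin d → ℝ) (h0 : ∀ i, 0 ≤ α i) :
    nrm q α ^ q = ∑ i, α i ^ q := by
  have h : 0 ≤ ∑ i, α i ^ q := Finset.sum_nonneg fun i _ => pow_nonneg (h0 i) q
  rw [nrm, one_div, Real.rpow_inv_natCast_pow h hq]

instance (n d : ℕ) (α : Fin d → ℝ) : IsProbabilityMeasure (sampleMeasure n d α) := by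
  unfold sampleMeasure gaussPi; infer_instance

lemma gram_meas {n d : ℕ} (α : Fin d → ℝ) :
    Measurable fun X : Fin n → Fin d → ℝ => (gramMat α X).det := by
  simp only [Matrix.det_apply, gramMat, Matrix.of_apply]
  fun_prop

lemma expect_bound {n d : ℕ} (hn : 1 ≤ n) (α : Fin d → ℝ) (h0 : ∀ i, 0 ≤ α i)
    (hS : 0 < nrm 2 α ^ 2) {τ : ℝ} (hτ : ∑ i, (α i ^ 2 / nrm 2 α ^ 2) ^ 2 = τ) (hτ0 : 0 < τ)
    (h : (n:ℝ) ^ 3 * τ < 4 / 1000) :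
    ∫⁻ X, ENNReal.ofReal (Real.exp (-(1/2) * Real.log (gramMat α X).det))
      ∂(sampleMeasure n d α) ≤ ENNReal.ofReal (1 + 224 * (n ^ 2 * τ)) := by
  set T := (√τ)⁻¹ with hT
  have hT0 : 0 < T := by positivity
  have hTτ : τ = 1 / T ^ 2 := by
    rw [hT, inv_pow, Real.sq_sqrt hτ0.le]; simp
  have hn3 : (n:ℝ) ^ 3 ≤ 4 / 1000 * T ^ 2 := by
    rw [hTτ, mul_one_div, div_lt_iff₀ (by positivity)] at h
    exact h.le
  obtain ⟨hnT, hnum⟩ := numeric n hn hT0 hn3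
  have hw0 : ∀ i, 0 ≤ α i ^ 2 / nrm 2 α ^ 2 := fun i => by positivity
  have hw1 : ∑ i, α i ^ 2 / nrm 2 α ^ 2 = 1 := by
    rw [← Finset.sum_div, ← nrm_pow 2 (by norm_num) α h0, div_self hS.ne']
  have hx : ∀ x : Fin n → ℝ, 0 ≤ x ⬝ᵥ x := fun x => Finset.sum_nonneg fun i _ => mul_self_nonneg _
  have hpi : 0 < √π ^ n := by positivity
  have key : ENNReal.ofReal (√π ^ n) * ∫⁻ X, ENNReal.ofReal
      (Real.exp (-(1/2) * Real.log (gramMat α X).det)) ∂(sampleMeasure n d α) ≤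
      ENNReal.ofReal (√π ^ n) * ENNReal.ofReal (1 + 224 * (n ^ 2 * τ)) := by
    have hmeas := gram_meas (n := n) α
    rw [← lintegral_const_mul _ (by fun_prop)]
    calc _ ≤ ∫⁻ X, (∫⁻ x : Fin n → ℝ, ENNReal.ofReal
            (Real.exp (-(x ⬝ᵥ (gramMat α X).mulVec x)))) ∂(sampleMeasure n d α) := by
          refine lintegral_mono fun X => ?_
          rw [← ENNReal.ofReal_mul hpi.le]
          exact gauss_mat_le (gram_psd α h0 X)
      _ = ∫⁻ x : Fin n → ℝ, ∫⁻ X, ENNReal.ofReal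
            (Real.exp (-(x ⬝ᵥ (gramMat α X).mulVec x))) ∂(sampleMeasure n d α) := by
          apply lintegral_lintegral_swap
          apply Measurable.aemeasurable
          simp only [Function.uncurry_def, quad_form]
          fun_prop
      _ ≤ ∫⁻ x : Fin n → ℝ, (ENNReal.ofReal
            (Real.exp (-(x ⬝ᵥ x)) * (1 + 2 * τ * (x ⬝ᵥ x) ^ 2)) +
            ENNReal.ofReal (Real.exp (n - T / 2)) *
              ENNReal.ofReal (((1 + 2 / T * (x ⬝ᵥ x)) ^ n)⁻¹)) := by
          refine lintegral_mono fun x => ?_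
          have hxx := hx x
          rw [expect_quad α h0, ← ENNReal.ofReal_mul (Real.exp_pos _).le,
            ← ENNReal.ofReal_add (by positivity) (by positivity)]
          apply ENNReal.ofReal_le_ofReal
          have := pointwise_bd _ hw0 hw1 hT0 (hτ.trans hTτ) n hnT hxx
          rw [← hTτ] at this
          exact this
      _ ≤ ENNReal.ofReal (√π ^ n * (1 + 24 * n ^ 2 * τ)) +
            ENNReal.ofReal (Real.exp (n - T / 2)) * ENNReal.ofReal (√π ^ n * √(2 * T) ^ n) := by
          rw [lintegral_add_left (by unfold dotProduct; fun_prop),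
            lintegral_const_mul _ (by unfold dotProduct; fun_prop)]
          gcongr
          · exact int_main n hτ0.le
          · exact int_tail n hT0
      _ ≤ _ := by
          rw [← ENNReal.ofReal_mul (Real.exp_pos _).le,
            ← ENNReal.ofReal_add (by positivity) (by positivity), ← ENNReal.ofReal_mul hpi.le]
          apply ENNReal.ofReal_le_ofReal
          rw [← hTτ] at hnum
          have h1 : (1:ℝ) ≤ (n:ℝ) ^ 2 := one_le_pow₀ (by exact_mod_cast hn)
          have h2 : τ ≤ (n:ℝ) ^ 2 * τ := by nlinarith
          have h3 : Real.exp (n - T / 2) * √(2 * T) ^ n ≤ 200 * ((n:ℝ) ^ 2 * τ) := by linarith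
          have h4 := mul_le_mul_of_nonneg_left h3 hpi.le
          nlinarith
  exact (ENNReal.mul_le_mul_iff_right (ENNReal.ofReal_pos.mpr hpi).ne' ENNReal.ofReal_ne_top).mp key

/-- Lemma 9. There is a universal constant `C > 0` such that if the
entries of `α` lie in `[0,1]` with some entry `1`, `‖α‖₂² > n + 1`, and `‖α‖₂²` is large
enough relative to `n` (as guaranteed when `n³(‖α‖₄/‖α‖₂)⁴` is small), then
`-E ln det((1/‖α‖₂²)𝕐D_α𝕐ᵀ) ≤ C (n²(‖α‖₄/‖α‖₂)⁴ + √(n(‖α‖₄/‖α‖₂)⁴))`. -/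
theorem neg_expected_log_det_bound :
    ∃ C > (0 : ℝ), ∃ ε > (0 : ℝ), ∀ (n d : ℕ) (α : Fin d → ℝ),
      (∀ i, α i ∈ Set.Icc (0 : ℝ) 1) → (∃ i, α i = 1) →
      nrm 2 α ^ 2 > (n : ℝ) + 1 →
      (n : ℝ) ^ 3 * (nrm 4 α / nrm 2 α) ^ 4 < ε →
        -(∫ X, Real.log (gramMat α X).det ∂(sampleMeasure n d α))
          ≤ C * ((n : ℝ) ^ 2 * (nrm 4 α / nrm 2 α) ^ 4
            + Real.sqrt ((n : ℝ) * (nrm 4 α / nrm 2 α) ^ 4)) := by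
  refine ⟨448, by norm_num, 4 / 1000, by norm_num, ?_⟩
  intro n d α hα hone _ hε
  have h0 : ∀ i, 0 ≤ α i := fun i => (hα i).1
  obtain ⟨i₀, hi₀⟩ := hone
  have hn2 := nrm_pow 2 (by norm_num) α h0
  have hn4 := nrm_pow 4 (by norm_num) α h0
  have hS : 0 < nrm 2 α ^ 2 := by
    rw [hn2]
    refine Finset.sum_pos' (fun i _ => sq_nonneg _) ⟨i₀, Finset.mem_univ _, ?_⟩
    rw [hi₀]; norm_num
  have hτ : ∑ i, (α i ^ 2 / nrm 2 α ^ 2) ^ 2 = (nrm 4 α / nrm 2 α) ^ 4 := by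
    rw [div_pow, hn4, Finset.sum_div]
    refine Finset.sum_congr rfl fun i _ => ?_
    rw [div_pow]; ring
  have hτ0 : 0 < (nrm 4 α / nrm 2 α) ^ 4 := by
    rw [← hτ]
    refine Finset.sum_pos' (fun i _ => sq_nonneg _) ⟨i₀, Finset.mem_univ _, ?_⟩
    rw [hi₀]; positivity
  generalize (nrm 4 α / nrm 2 α) ^ 4 = τ at *
  have hsq : 0 ≤ √((n:ℝ) * τ) := Real.sqrt_nonneg _
  have hn2τ : 0 ≤ (n:ℝ) ^ 2 * τ := by positivity
  suffices hmain : -(∫ X, Real.log (gramMat α X).det ∂(sampleMeasure n d α)) ≤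
      448 * ((n:ℝ) ^ 2 * τ) by linarith
  rcases Nat.eq_zero_or_pos n with rfl | hn
  · simp
  by_cases hint : Integrable (fun X => Real.log (gramMat α X).det) (sampleMeasure n d α)
  swap
  · rw [integral_undef hint]; linarith
  have hb := expect_bound hn α h0 hS hτ hτ0 hε
  set φ : (Fin n → Fin d → ℝ) → ℝ := fun X => Real.exp (-(1/2) * Real.log (gramMat α X).det)
  have hmeas := gram_meas (n := n) α
  have hφm : Measurable φ := by fun_prop
  have hφ0 : ∀ X, 0 ≤ φ X := fun X => (Real.exp_pos _).le
  have hφi : Integrable φ (sampleMeasure n d α) := by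
    refine ⟨hφm.aestronglyMeasurable, ?_⟩
    rw [hasFiniteIntegral_iff_ofReal (Filter.Eventually.of_forall hφ0)]
    exact hb.trans_lt ENNReal.ofReal_lt_top
  have hφb : ∫ X, φ X ∂(sampleMeasure n d α) ≤ 1 + 224 * (n ^ 2 * τ) := by
    rw [integral_eq_lintegral_of_nonneg_ae (Filter.Eventually.of_forall hφ0)
      hφm.aestronglyMeasurable]
    exact ENNReal.toReal_le_of_le_ofReal (by positivity) hb
  have hle : ∫ X, (-(1/2) * Real.log (gramMat α X).det) ∂(sampleMeasure n d α) ≤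
      ∫ X, (φ X - 1) ∂(sampleMeasure n d α) := by
    refine integral_mono (hint.const_mul _) (hφi.sub (integrable_const _)) fun X => ?_
    have := Real.add_one_le_exp (-(1/2) * Real.log (gramMat α X).det)
    simp only [φ]
    linarith
  rw [integral_const_mul, integral_sub hφi (integrable_const _)] at hle
  simp only [integral_const, probReal_univ, smul_eq_mul, mul_one] at hle
  linarith

end
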